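/- Let α, β, γ, σ be integers with β ≥ γ > σ ≥ 0, α + σ ≥ 2γ, α + β + σ > 3, and γ < β, and let G be the group presented by ⟨a,b | a^(2^α) = b^(2^β) = [a,b,a] = [a,b,b] = e, a^(2^(α+σ-γ)) = [a,b]^(2^σ)⟩ (general type). Then G is capable if and only if α = β and γ < β - 1. -/

import Mathlib

/-- The paper's commutator convention: `[x,y] = x⁻¹y⁻¹xy`. -/
def pcomm {G : Type*} [Group G] (x y : G) : G := x⁻¹ * y⁻¹ * x * y

/-- A group is capable if it is isomorphic to `K/Z(K)` for some group `K`. -/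
def IsCapable (G : Type*) [Group G] : Prop :=
  ∃ (K : Type) (_ : Group K), Nonempty ((K ⧸ Subgroup.center K) ≃* G)

/-- Relators of the type (ii) (general type) presentation
`⟨a,b | a^(2^α) = b^(2^β) = [a,b,a] = [a,b,b] = e, a^(2^(α+σ-γ)) = [a,b]^(2^σ)⟩`. -/
def relsII (α β γ σ : ℕ) : Set (FreeGroup (Fin 2)) :=
  let a : FreeGroup (Fin 2) := FreeGroup.of 0
  let b : FreeGroup (Fin 2) := FreeGroup.of 1
  {a ^ 2 ^ α, b ^ 2 ^ β, pcomm (pcomm a b) a, pcomm (pcomm a b) b,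
    a ^ 2 ^ (α + σ - γ) * (pcomm a b ^ 2 ^ σ)⁻¹}

section Necessity

variable {K : Type*} [Group K]

lemma aux_pow_comm {A D X : K} (hX : ∀ g, X * g = g * X) (h : D * A = A * D * X) (n : ℕ) :
    D ^ n * A = A * D ^ n * X ^ n := by
  have hXn : ∀ (n : ℕ) g, X ^ n * g = g * X ^ n := fun n g =>
    (Commute.pow_left (show Commute X g from hX g) n)
  induction n with
  | zero => simp
  | succ n ih =>
    calc D ^ (n+1) * A = D ^ n * (D * A) := by rw [pow_succ, mul_assoc]
      _ = (D ^ n * A) * D * X := by rw [h]; group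
      _ = A * D ^ n * (X ^ n * D) * X := by rw [ih]; group
      _ = A * D ^ (n+1) * X ^ (n+1) := by rw [hXn]; simp only [pow_succ, mul_assoc]

lemma aux_mul_pow {A D X : K} (hX : ∀ g, X * g = g * X) (h : D * A = A * D * X) (n : ℕ) :
    (A * D) ^ n = A ^ n * D ^ n * X ^ (n.choose 2) := by
  have hXn : ∀ (n : ℕ) g, X ^ n * g = g * X ^ n := fun n g =>
    (Commute.pow_left (show Commute X g from hX g) n)
  induction n with
  | zero => simp
  | succ n ih =>
    calc (A * D) ^ (n+1) = A ^ n * D ^ n * (X ^ (n.choose 2) * (A * D)) := by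
            rw [pow_succ, ih]; group
      _ = A ^ n * (D ^ n * A) * D * X ^ (n.choose 2) := by rw [hXn]; simp only [mul_assoc]
      _ = A ^ n * A * D ^ n * (X ^ n * D) * X ^ (n.choose 2) := by
            rw [aux_pow_comm hX h]; simp only [mul_assoc]
      _ = A ^ (n+1) * D ^ (n+1) * X ^ ((n+1).choose 2) := by
            rw [hXn, Nat.choose_succ_succ' n 1, Nat.choose_one_right, pow_add X, pow_succ A,
              pow_succ D]
            simp only [mul_assoc]

lemma aux_choose (k : ℕ) : (2 ^ (k+1)).choose 2 = 2 ^ k * (2 ^ (k+1) - 1) := by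
  rw [Nat.choose_two_right]
  apply Nat.div_eq_of_eq_mul_left (by norm_num)
  rw [pow_succ]; ring

lemma aux_pow_one {X : K} {s k : ℕ} (h : X ^ 2 ^ s = 1) (hk : s ≤ k) (r : ℕ) :
    X ^ (2 ^ k * r) = 1 := by
  obtain ⟨d, rfl⟩ := Nat.exists_eq_add_of_le hk
  rw [pow_add, mul_assoc, pow_mul, h, one_pow]

/-- The computation in a group `K` with central quotient. -/
lemma aux_nec (α β γ σ : ℕ)
    (hσγ : σ < γ) (h2γ : 2 * γ ≤ α + σ) (hγltβ : γ < β)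
    (A B C X Y : K) (hC : C = pcomm A B) (hXd : X = pcomm C A) (hYd : Y = pcomm C B)
    (hX : ∀ g, X * g = g * X) (hY : ∀ g, Y * g = g * Y)
    (hA : ∀ g, A ^ 2 ^ α * g = g * A ^ 2 ^ α)
    (hB : ∀ g, B ^ 2 ^ β * g = g * B ^ 2 ^ β)
    (hW : ∀ g, (A ^ 2 ^ (α + σ - γ) * (C ^ 2 ^ σ)⁻¹) * g
      = g * (A ^ 2 ^ (α + σ - γ) * (C ^ 2 ^ σ)⁻¹))
    (hA1 : ¬ (A ^ 2 ^ (α - 1) * B = B * A ^ 2 ^ (α - 1)))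
    (hB1 : ¬ (B ^ 2 ^ (β - 1) * A = A * B ^ 2 ^ (β - 1))) :
    α = β ∧ γ < β - 1 := by
  have hCA : C * A = A * C * X := by rw [hXd]; unfold pcomm; group
  have hCB : C * B = B * C * Y := by rw [hYd]; unfold pcomm; group
  have hAB : A * B = B * (A * C) := by rw [hC]; unfold pcomm; group
  have hBA : B * A = A * (B * C⁻¹) := by rw [hC]; unfold pcomm; group
  have hYi : ∀ g, Y⁻¹ * g = g * Y⁻¹ := fun g =>
    (Commute.inv_left (show Commute Y g from hY g))
  have hCiB : C⁻¹ * B = B * C⁻¹ * Y⁻¹ := by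
    rw [inv_mul_eq_iff_eq_mul, ← mul_assoc, ← mul_assoc, hCB, mul_assoc (B * C) Y, hY]
    group
  have hconjA : ∀ n : ℕ, A ^ n * B = B * (A ^ n * C ^ n * X ^ (n.choose 2)) := by
    intro n
    rw [← aux_mul_pow hX hCA]
    exact (show SemiconjBy B (A * C) A from hAB.symm).pow_right n |>.eq.symm
  have hconjB : ∀ n : ℕ, B ^ n * A = A * (B ^ n * C⁻¹ ^ n * Y⁻¹ ^ (n.choose 2)) := by
    intro n
    rw [← aux_mul_pow hYi hCiB]
    exact (show SemiconjBy A (B * C⁻¹) B from hBA.symm).pow_right n |>.eq.symm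
  -- commuting criteria
  have hcA : ∀ n : ℕ, A ^ n * B = B * A ^ n ↔ C ^ n * X ^ (n.choose 2) = 1 := by
    intro n
    rw [hconjA, mul_right_inj, mul_assoc, mul_eq_left]
  have hcB : ∀ n : ℕ, B ^ n * A = A * B ^ n ↔ C ^ n * Y ^ (n.choose 2) = 1 := by
    intro n
    rw [hconjB, mul_right_inj, mul_assoc, mul_eq_left]
    have : C⁻¹ ^ n * Y⁻¹ ^ (n.choose 2) = (C ^ n * Y ^ (n.choose 2))⁻¹ := by
      rw [mul_inv_rev, inv_pow, inv_pow, ← inv_pow Y]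
      exact ((Commute.pow_left (show Commute Y⁻¹ _ from hYi _) _)).eq.symm
    rw [this, inv_eq_one]
  -- X has order dividing 2^σ
  set N := 2 ^ (α + σ - γ) with hN
  set W := A ^ N * (C ^ 2 ^ σ)⁻¹ with hWd
  have hAN : A ^ N = W * C ^ 2 ^ σ := by rw [hWd]; group
  have hX1 : X ^ 2 ^ σ = 1 := by
    have h1 : C ^ 2 ^ σ * A = A * C ^ 2 ^ σ := by
      have h2 : A ^ N * A = A * A ^ N := by rw [← pow_succ, ← pow_succ']
      rw [hAN, ← mul_assoc A, ← hW A, mul_assoc W, mul_assoc W,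
        mul_right_inj] at h2
      exact h2
    rw [aux_pow_comm hX hCA, mul_eq_left] at h1
    exact h1
  have hXk : ∀ k, σ ≤ k → X ^ ((2 ^ (k+1)).choose 2) = 1 := by
    intro k hk
    rw [aux_choose]; exact aux_pow_one hX1 hk _
  have hCN : C ^ N = Y ^ 2 ^ σ := by
    have h1 := hconjA N
    have hXN : X ^ (N.choose 2) = 1 := by
      rw [hN, show α + σ - γ = (α + σ - γ - 1) + 1 by omega]
      exact hXk _ (by omega)
    rw [hXN, mul_one] at h1
    have h2 : A ^ N * B = B * (A ^ N * Y ^ 2 ^ σ) := by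
      rw [hAN, mul_assoc, aux_pow_comm hY hCB, ← mul_assoc, ← mul_assoc, hW B]
      simp only [mul_assoc]
    rw [h1, mul_right_inj, mul_right_inj] at h2
    exact h2
  have hCα : C ^ 2 ^ α = 1 := by
    have h := (hcA (2 ^ α)).1 (hA B)
    have h3 := hXk (α - 1) (by omega)
    rw [show α - 1 + 1 = α by omega] at h3
    rwa [h3, mul_one] at h
  have hYC : ∀ k, σ ≤ k → k ≤ γ → Y ^ 2 ^ k = C ^ 2 ^ (α + k - γ) := by
    intro k h1 h2
    rw [show 2 ^ k = 2 ^ σ * 2 ^ (k - σ) by rw [← pow_add]; congr 1; omega, pow_mul, ← hCN,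
      ← pow_mul, hN, ← pow_add]
    congr 2; omega
  have hYγ : Y ^ 2 ^ γ = 1 := by
    rw [hYC γ (by omega) le_rfl, Nat.add_sub_cancel, hCα]
  have hCβ : C ^ 2 ^ β = 1 := by
    have h := (hcB (2 ^ β)).1 (hB A)
    have h3 := aux_choose (β - 1)
    rw [show β - 1 + 1 = β by omega] at h3
    rwa [h3, aux_pow_one hYγ (by omega), mul_one] at h
  have hCα1 : C ^ 2 ^ (α - 1) ≠ 1 := by
    intro h
    apply hA1
    rw [hcA, h, one_mul, show α - 1 = (α - 2) + 1 by omega]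
    exact hXk _ (by omega)
  have hαβ : α ≤ β := by
    by_contra hlt
    apply hCα1
    have := aux_pow_one hCβ (show β ≤ α - 1 by omega) 1
    rwa [mul_one] at this
  have hch := aux_choose (β - 2)
  rw [show β - 2 + 1 = β - 1 by omega] at hch
  rw [hcB, hch] at hB1
  have hγ1 : γ < β - 1 := by
    by_contra hge
    have hg : γ = β - 1 := by omega
    have hab : α = β := by omega
    apply hB1
    have h1 := hYC (γ - 1) (by omega) (by omega)
    rw [show α + (γ - 1) - γ = β - 1 by omega] at h1
    rw [← h1, show γ - 1 = β - 2 by omega, ← pow_add]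
    have : 2 ^ (β - 2) + 2 ^ (β - 2) * (2 ^ (β - 1) - 1) = 2 ^ (β - 1) * 2 ^ (β - 2) := by
      have : 2 ^ (β - 1) = (2 ^ (β - 1) - 1) + 1 := by
        have : 0 < 2 ^ (β - 1) := by positivity
        omega
      conv_rhs => rw [this]
      ring
    rw [this]
    exact aux_pow_one hYγ hg.le _
  refine ⟨?_, hγ1⟩
  by_contra hne
  apply hB1
  rw [aux_pow_one hYγ (by omega), mul_one]
  have := aux_pow_one hCα (show α ≤ β - 1 by omega) 1
  rwa [mul_one] at this

end Necessity

section Model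

/-- The lattice of relations. -/
def modelL (N p s : ℤ) : AddSubgroup (ℤ × ℤ) where
  carrier := {z | ∃ t r : ℤ, z.1 = t * N ∧ z.2 = r * p - t * s}
  zero_mem' := ⟨0, 0, by simp, by simp⟩
  add_mem' := by
    rintro x y ⟨t, r, h1, h2⟩ ⟨t', r', h3, h4⟩
    exact ⟨t + t', r + r', by rw [Prod.fst_add, h1, h3]; ring,
      by rw [Prod.snd_add, h2, h4]; ring⟩
  neg_mem' := by
    rintro x ⟨t, r, h1, h2⟩
    exact ⟨-t, -r, by rw [Prod.fst_neg, h1]; ring, by rw [Prod.snd_neg, h2]; ring⟩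

lemma model_exists (N p s : ℤ) (hpN : p ∣ N) :
    ∃ (M : Type) (_ : AddCommGroup M) (c y : M) (D : M →+ M),
      D c = y ∧ (∀ z, D (D z) = 0) ∧ (∀ z, p • D z = 0) ∧
      ∀ u v : ℤ, u • c + v • y = 0 ↔ ∃ t r : ℤ, u = t * N ∧ v = r * p - t * s := by
  let L := modelL N p s
  let D0 : ℤ × ℤ →+ ℤ × ℤ := (AddMonoidHom.inr ℤ ℤ).comp (AddMonoidHom.fst ℤ ℤ)
  have hD0 : L ≤ L.comap D0 := by
    rintro ⟨u, v⟩ ⟨t, r, h1, h2⟩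
    obtain ⟨d, rfl⟩ := hpN
    refine ⟨0, t * d, by simp [D0], ?_⟩
    simp only [D0, AddMonoidHom.comp_apply, AddMonoidHom.inr_apply, AddMonoidHom.coe_fst]
    simp only at h1
    rw [h1]; ring
  refine ⟨(ℤ × ℤ) ⧸ L, inferInstance, QuotientAddGroup.mk (1, 0), QuotientAddGroup.mk (0, 1),
    QuotientAddGroup.map L L D0 hD0, ?_, ?_, ?_, ?_⟩
  · rw [QuotientAddGroup.map_mk]; rfl
  · intro z
    induction z using QuotientAddGroup.induction_on with
    | H z =>
      rw [QuotientAddGroup.map_mk, QuotientAddGroup.map_mk]; rfl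
  · intro z
    induction z using QuotientAddGroup.induction_on with
    | H z =>
      rw [QuotientAddGroup.map_mk, ← QuotientAddGroup.mk_zsmul, QuotientAddGroup.eq_zero_iff]
      exact ⟨0, z.1, by simp [D0], by simp [D0, mul_comm]⟩
  · intro u v
    rw [← QuotientAddGroup.mk_zsmul, ← QuotientAddGroup.mk_zsmul, ← QuotientAddGroup.mk_add,
      QuotientAddGroup.eq_zero_iff]
    have : u • ((1:ℤ), (0:ℤ)) + v • ((0:ℤ), (1:ℤ)) = (u, v) := by simp
    rw [this]
    rfl

variable {H : Type*} [AddCommGroup H]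

/-- Translations as permutations. -/
def transl (h : H) : Equiv.Perm H := Equiv.addRight h

lemma transl_apply (h x : H) : transl h x = x + h := rfl

lemma transl_add (g h : H) : transl (g + h) = transl g * transl h := by
  ext x; simp only [Equiv.Perm.mul_apply, transl_apply]; abel

lemma transl_zero : transl (0 : H) = 1 := by
  ext x; simp [transl_apply]

lemma transl_neg (g : H) : transl (-g) = (transl g)⁻¹ := by
  rw [eq_inv_iff_mul_eq_one, ← transl_add, neg_add_cancel, transl_zero]

lemma transl_zsmul (n : ℤ) (g : H) : transl (n • g) = (transl g) ^ n := by
  induction n using Int.induction_on with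
  | zero => simp [transl_zero]
  | succ n ih => rw [add_smul, transl_add, ih, one_smul, zpow_add_one]
  | pred n ih => rw [sub_smul, sub_eq_add_neg, transl_add, ih, one_smul, zpow_sub_one, transl_neg]

lemma transl_nsmul (n : ℕ) (g : H) : transl (n • g) = (transl g) ^ n := by
  rw [← natCast_zsmul, transl_zsmul, zpow_natCast]

lemma transl_comm (g h : H) : Commute (transl g) (transl h) := by
  rw [Commute, SemiconjBy, ← transl_add, ← transl_add, add_comm]

lemma transl_pcomm (T : H ≃+ H) (h : H) :
    pcomm (transl h) (T.toEquiv : Equiv.Perm H)⁻¹ = transl (T h - h) := by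
  unfold pcomm
  rw [← transl_neg, inv_inv]
  ext x
  simp only [Equiv.Perm.mul_apply, transl_apply]
  have h1 : ∀ z, (T.toEquiv : Equiv.Perm H) z = T z := fun z => rfl
  have h2 : T ((T.toEquiv : Equiv.Perm H)⁻¹ x) = x := T.toEquiv.apply_symm_apply x
  rw [h1, map_add, h2]; abel

lemma transl_commute_iff (T : H ≃+ H) (h : H) :
    Commute (transl h) (T.toEquiv : Equiv.Perm H)⁻¹ ↔ T h = h := by
  rw [Commute.inv_right_iff]
  constructor
  · intro hc
    have := congrArg (fun f : Equiv.Perm H => f 0) hc.eq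
    simp only [Equiv.Perm.mul_apply, transl_apply] at this
    have h1 : ∀ z, (T.toEquiv : Equiv.Perm H) z = T z := fun z => rfl
    rw [h1, h1] at this
    simpa using this.symm
  · intro hT
    ext x
    simp only [Equiv.Perm.mul_apply, transl_apply]
    have h1 : ∀ z, (T.toEquiv : Equiv.Perm H) z = T z := fun z => rfl
    rw [h1, h1, map_add, hT]

end Model

section Glue

lemma free_comm {P : Type*} [Group P] (f : FreeGroup (Fin 2) →* P) (g : P)
    (h0 : Commute g (f (FreeGroup.of 0))) (h1 : Commute g (f (FreeGroup.of 1)))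
    (v : FreeGroup (Fin 2)) : Commute g (f v) := by
  induction v with
  | C1 => rw [map_one]; exact Commute.one_right g
  | of i => fin_cases i
            · exact h0
            · exact h1
  | inv_of i ih => rw [map_inv]; exact ih.inv_right
  | mul x y hx hy => rw [map_mul]; exact hx.mul_right hy

lemma free_normal {P : Type*} [Group P] (f : FreeGroup (Fin 2) →* P)
    (rels : Set (FreeGroup (Fin 2)))
    (hrel : ∀ r ∈ rels, Commute (f r) (f (FreeGroup.of 0)) ∧ Commute (f r) (f (FreeGroup.of 1)))
    (w : FreeGroup (Fin 2)) (hw : w ∈ Subgroup.normalClosure rels) (v : FreeGroup (Fin 2)) :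
    Commute (f w) (f v) := by
  have hle : Subgroup.normalClosure rels ≤ (Subgroup.center f.range).comap f.rangeRestrict := by
    apply Subgroup.normalClosure_le_normal
    intro r hr
    show f.rangeRestrict r ∈ Subgroup.center f.range
    rw [Subgroup.mem_center_iff]
    rintro ⟨_, v, rfl⟩
    exact Subtype.ext (free_comm f _ (hrel r hr).1 (hrel r hr).2 v).eq.symm
  have h := hle hw
  rw [Subgroup.mem_comap, Subgroup.mem_center_iff] at h
  exact (congrArg Subtype.val (h (f.rangeRestrict v))).symm

lemma capable_of {P : Type} [Group P] (f : FreeGroup (Fin 2) →* P)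
    (rels : Set (FreeGroup (Fin 2)))
    (hrel : ∀ r ∈ rels, Commute (f r) (f (FreeGroup.of 0)) ∧ Commute (f r) (f (FreeGroup.of 1)))
    (hker : ∀ w, Commute (f w) (f (FreeGroup.of 0)) → Commute (f w) (f (FreeGroup.of 1)) →
      PresentedGroup.mk rels w = 1) :
    IsCapable (PresentedGroup rels) := by
  let ψ : FreeGroup (Fin 2) →* f.range ⧸ Subgroup.center f.range :=
    (QuotientGroup.mk' (Subgroup.center f.range)).comp f.rangeRestrict
  have hs : Function.Surjective ψ :=
    (QuotientGroup.mk'_surjective _).comp f.rangeRestrict_surjective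
  have hk : ψ.ker = Subgroup.normalClosure rels := by
    ext w
    have h1 : w ∈ ψ.ker ↔ f.rangeRestrict w ∈ Subgroup.center f.range := by
      rw [MonoidHom.mem_ker]
      exact QuotientGroup.eq_one_iff _
    rw [h1, Subgroup.mem_center_iff]
    constructor
    · intro h
      rw [← PresentedGroup.mk_eq_one_iff]
      exact hker w (congrArg Subtype.val (h (f.rangeRestrict _))).symm
        (congrArg Subtype.val (h (f.rangeRestrict _))).symm
    · rintro h ⟨_, v, rfl⟩
      exact Subtype.ext (free_normal f rels hrel w h v).eq.symm
  exact ⟨f.range, inferInstance,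
    ⟨((QuotientGroup.quotientMulEquivOfEq hk).symm.trans
      (QuotientGroup.quotientKerEquivOfSurjective ψ hs)).symm⟩⟩

lemma normal_form {G : Type*} [Group G] (φ : FreeGroup (Fin 2) →* G) (a b c : G)
    (ha : φ (FreeGroup.of 0) = a) (hb : φ (FreeGroup.of 1) = b) (hc : c = pcomm a b)
    (hca : Commute c a) (hcb : Commute c b) (w : FreeGroup (Fin 2)) :
    ∃ i j k : ℤ, φ w = a ^ i * b ^ j * c ^ k := by
  have hab : a * b = b * (a * c) := by rw [hc]; unfold pcomm; group
  have key : ∀ i : ℤ, a ^ i * b = b * (a ^ i * c ^ i) := by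
    intro i
    rw [← hca.symm.mul_zpow]
    exact (show SemiconjBy b (a * c) a from hab.symm).zpow_right i |>.eq.symm
  have keyj : ∀ j i : ℤ, ∃ k : ℤ, b ^ j * a ^ i = a ^ i * b ^ j * c ^ k := by
    intro j i
    refine ⟨-i * j, ?_⟩
    have h1 : SemiconjBy (a ^ i) (b * c ^ (-i)) b := by
      show a ^ i * (b * c ^ (-i)) = b * a ^ i
      rw [← mul_assoc, key]; group
    have h2 := (h1.zpow_right j).eq
    rw [← h2, (hcb.symm.zpow_right (-i)).mul_zpow, ← zpow_mul, mul_assoc]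
  induction w with
  | C1 => exact ⟨0, 0, 0, by simp⟩
  | of i => 
    fin_cases i
    · exact ⟨1, 0, 0, by simpa using ha⟩
    · exact ⟨0, 1, 0, by simpa using hb⟩
  | inv_of i _ =>
    rw [map_inv]
    fin_cases i
    · exact ⟨-1, 0, 0, by simpa using ha⟩
    · exact ⟨0, -1, 0, by simpa using hb⟩
  | mul x y hx hy =>
    obtain ⟨i, j, k, h1⟩ := hx
    obtain ⟨i', j', k', h2⟩ := hy
    obtain ⟨m, hm⟩ := keyj j i'
    refine ⟨i + i', j + j', m + k + k', ?_⟩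
    rw [map_mul, h1, h2]
    calc a ^ i * b ^ j * c ^ k * (a ^ i' * b ^ j' * c ^ k')
        = a ^ i * b ^ j * (c ^ k * (a ^ i' * b ^ j')) * c ^ k' := by simp only [mul_assoc]
      _ = a ^ i * (b ^ j * a ^ i') * b ^ j' * c ^ k * c ^ k' := by
          rw [(((hca.zpow_left k).zpow_right i').mul_right ((hcb.zpow_left k).zpow_right j')).eq]
          simp only [mul_assoc]
      _ = a ^ i * a ^ i' * b ^ j * (c ^ m * b ^ j') * c ^ k * c ^ k' := by
          rw [hm]; simp only [mul_assoc]
      _ = _ := by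
          rw [((hcb.zpow_left m).zpow_right j').eq]
          simp only [zpow_add, mul_assoc]

end Glue

lemma pcomm_eq_one {G : Type*} [Group G] {x y : G} : pcomm x y = 1 ↔ Commute x y := by
  unfold pcomm
  rw [mul_assoc, ← mul_inv_rev, inv_mul_eq_one, Commute, SemiconjBy, eq_comm]

lemma map_pcomm {G P : Type*} [Group G] [Group P] (f : G →* P) (x y : G) :
    f (pcomm x y) = pcomm (f x) (f y) := by
  simp [pcomm]

lemma relsII_forall (α β γ σ : ℕ) {p : FreeGroup (Fin 2) → Prop} :
    (∀ r ∈ relsII α β γ σ, p r) ↔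
      p (FreeGroup.of 0 ^ 2 ^ α) ∧ p (FreeGroup.of 1 ^ 2 ^ β) ∧
      p (pcomm (pcomm (FreeGroup.of 0) (FreeGroup.of 1)) (FreeGroup.of 0)) ∧
      p (pcomm (pcomm (FreeGroup.of 0) (FreeGroup.of 1)) (FreeGroup.of 1)) ∧
      p (FreeGroup.of 0 ^ 2 ^ (α + σ - γ) *
        (pcomm (FreeGroup.of 0) (FreeGroup.of 1) ^ 2 ^ σ)⁻¹) := by
  simp [relsII]

/-- The order of `a` in the presented group. -/
lemma a_order (α β γ σ : ℕ)
    (hσγ : σ < γ) (h2γ : 2 * γ ≤ α + σ) (hγltβ : γ < β) :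
    PresentedGroup.mk (relsII α β γ σ) (FreeGroup.of 0 ^ 2 ^ (α - 1)) ≠ 1 := by
  intro hone
  obtain ⟨M, _, c, y, D, hDc, hDD, hDp, hL⟩ := model_exists (2 ^ (α + σ - γ)) (2 ^ γ) (2 ^ σ)
    (pow_dvd_pow _ (by omega))
  have hDy : D y = 0 := by rw [← hDc, hDD]
  let T : M ≃+ M :=
    { toFun := fun z => z + D z
      invFun := fun z => z - D z
      left_inv := fun z => by simp [hDD]
      right_inv := fun z => by simp [hDD]
      map_add' := fun z w => by rw [map_add]; abel }
  have hT : ∀ z, T z = z + D z := fun z => rfl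
  let f : FreeGroup (Fin 2) →* Equiv.Perm M :=
    FreeGroup.lift ![transl c, (T.toEquiv : Equiv.Perm M)⁻¹]
  have f0 : f (FreeGroup.of 0) = transl c := by simp [f]
  have f1 : f (FreeGroup.of 1) = (T.toEquiv : Equiv.Perm M)⁻¹ := by simp [f]
  have fc : f (pcomm (FreeGroup.of 0) (FreeGroup.of 1)) = transl y := by
    rw [map_pcomm, f0, f1, transl_pcomm, hT, hDc, add_sub_cancel_left]
  have hpow : ∀ (k : ℕ) (z : M), ((T.toEquiv : Equiv.Perm M) ^ k) z = z + k • D z := by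
    intro k
    induction k with
    | zero => simp
    | succ k ih =>
      intro z
      rw [pow_succ, Equiv.Perm.mul_apply, ih]
      show T z + k • D (T z) = _
      rw [hT, map_add, hDD, add_zero, add_smul, one_smul]; abel
  have hDcoef : ∀ z, ((2:ℤ) ^ β) • D z = 0 := by
    intro z
    rw [show β = (β - γ) + γ by omega, pow_add, mul_smul, hDp, smul_zero]
  have hrel : ∀ r ∈ relsII α β γ σ, f r = 1 := by
    rw [relsII_forall]
    refine ⟨?_, ?_, ?_, ?_, ?_⟩
    · rw [map_pow, f0, ← transl_nsmul, ← transl_zero]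
      congr 1
      have := (hL (2 ^ α) 0).2 ⟨2 ^ (γ - σ), 1, by rw [← pow_add]; congr 1; omega, by
        rw [← pow_add, show γ - σ + σ = γ by omega]; ring⟩
      rw [zero_smul, add_zero] at this
      rw [← this, ← natCast_zsmul]; push_cast; rfl
    · rw [map_pow, f1, inv_pow, inv_eq_one]
      ext z
      rw [hpow, ← natCast_zsmul]; push_cast
      rw [hDcoef]; simp
    · rw [map_pcomm, fc, f0, pcomm_eq_one]; exact transl_comm _ _
    · rw [map_pcomm, fc, f1, pcomm_eq_one, transl_commute_iff, hT, hDy, add_zero]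
    · rw [map_mul, map_inv, map_pow, map_pow, fc, f0, ← transl_nsmul, ← transl_nsmul,
        ← transl_neg, ← transl_add, ← transl_zero]
      congr 1
      have := (hL (2 ^ (α + σ - γ)) (-2 ^ σ)).2 ⟨1, 0, by ring, by ring⟩
      rw [← this, ← natCast_zsmul, ← natCast_zsmul]; push_cast; rw [neg_smul]
  have h2 : f (FreeGroup.of 0 ^ 2 ^ (α - 1)) = 1 := by
    rw [PresentedGroup.mk_eq_one_iff] at hone
    exact PresentedGroup.closure_rels_subset_ker hrel hone
  rw [map_pow, f0, ← transl_nsmul] at h2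
  have h3 := congrArg (fun g : Equiv.Perm M => g 0) h2
  simp only [transl_apply, zero_add, Equiv.Perm.one_apply] at h3
  rw [← natCast_zsmul] at h3
  obtain ⟨t, r, h4, h5⟩ := (hL (2 ^ (α - 1)) 0).1 (by push_cast at h3; simpa using h3)
  have h6 : t = 2 ^ (γ - 1 - σ) := by
    have : (2:ℤ) ^ (α - 1) = 2 ^ (γ - 1 - σ) * 2 ^ (α + σ - γ) := by
      rw [← pow_add]; congr 1; omega
    rw [this] at h4
    exact (mul_right_cancel₀ (by positivity) h4).symm
  rw [h6, ← pow_add, show γ - 1 - σ + σ = γ - 1 by omega] at h5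
  have h7 : (2:ℤ) ^ γ = 2 ^ (γ - 1) * 2 := by rw [← pow_succ]; congr 1; omega
  rw [h7] at h5
  have h8 : (2:ℤ) ^ (γ - 1) * (r * 2 - 1) = 0 := by linarith
  rcases mul_eq_zero.1 h8 with h | h
  · exact absurd h (by positivity)
  · omega

lemma b_order (α β γ σ : ℕ) (hγltβ : γ < β) :
    PresentedGroup.mk (relsII α β γ σ) (FreeGroup.of 1 ^ 2 ^ (β - 1)) ≠ 1 := by
  intro hone
  let f : FreeGroup (Fin 2) →* Multiplicative (ZMod (2 ^ β)) :=
    FreeGroup.lift ![1, Multiplicative.ofAdd 1]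
  have f0 : f (FreeGroup.of 0) = 1 := by simp [f]
  have f1 : f (FreeGroup.of 1) = Multiplicative.ofAdd 1 := by simp [f]
  have hrel : ∀ r ∈ relsII α β γ σ, f r = 1 := by
    rw [relsII_forall]
    refine ⟨?_, ?_, ?_, ?_, ?_⟩
    · rw [map_pow, f0, one_pow]
    · rw [map_pow, f1, ← ofAdd_nsmul, nsmul_eq_mul, ZMod.natCast_self, zero_mul, ofAdd_zero]
    · rw [map_pcomm, pcomm_eq_one]; exact Commute.all _ _
    · rw [map_pcomm, pcomm_eq_one]; exact Commute.all _ _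
    · rw [map_mul, map_inv, map_pow, map_pow, map_pcomm, f0, pcomm_eq_one.2 (Commute.all _ _)]
      simp
  have h2 : f (FreeGroup.of 1 ^ 2 ^ (β - 1)) = 1 := by
    rw [PresentedGroup.mk_eq_one_iff] at hone
    exact PresentedGroup.closure_rels_subset_ker hrel hone
  rw [map_pow, f1, ← ofAdd_nsmul, ofAdd_eq_one, nsmul_eq_mul, mul_one,
    ZMod.natCast_eq_zero_iff, Nat.pow_dvd_pow_iff_le_right (by norm_num)] at h2
  omega

lemma suff_arith (n γ σ : ℕ) (hσγ : σ < γ) (hγ : γ + 2 ≤ n) (j e t r : ℤ)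
    (he : 2 * e = j * (j - 1)) (hj : j = t * 2 ^ (n + σ - γ)) (her : e = r * 2 ^ γ - t * 2 ^ σ) :
    ∃ q : ℤ, j = q * 2 ^ n := by
  obtain ⟨d, rfl⟩ := Nat.exists_eq_add_of_lt hσγ
  obtain ⟨m, rfl⟩ := Nat.exists_eq_add_of_le hγ
  rw [show σ + d + 1 + 2 + m + σ - (σ + d + 1) = σ + 2 + m by omega] at hj
  have h1 : t * (1 + 2 ^ (m + 1) * (j - 1)) = r * 2 ^ (d + 1) := by
    have h2 : (2:ℤ) ^ (σ + 1) * (t * (1 + 2 ^ (m + 1) * (j - 1)))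
        = 2 ^ (σ + 1) * (r * 2 ^ (d + 1)) := by
      have h3 : 2 * (r * 2 ^ (σ + d + 1) - t * 2 ^ σ) = t * 2 ^ (σ + 2 + m) * (j - 1) := by
        rw [← her, he, ← hj]
      have e1 : (2:ℤ) ^ (σ + d + 1) = 2 ^ σ * 2 ^ d * 2 := by ring
      have e2 : (2:ℤ) ^ (σ + 2 + m) = 2 ^ σ * 4 * 2 ^ m := by ring
      rw [e1, e2] at h3
      ring_nf at h3 ⊢
      linarith
    exact mul_left_cancel₀ (by positivity) h2
  have hcop : IsCoprime ((2:ℤ) ^ (d + 1)) (1 + 2 ^ (m + 1) * (j - 1)) := by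
    apply IsCoprime.pow_left
    refine ⟨-(2 ^ m * (j - 1)), 1, ?_⟩
    ring
  obtain ⟨q, hq⟩ := hcop.dvd_of_dvd_mul_right (Dvd.intro_left r h1.symm)
  refine ⟨q, ?_⟩
  rw [hj, hq]
  ring

lemma suff (n γ σ : ℕ) (hσγ : σ < γ) (h2γ : 2 * γ ≤ n + σ) (hγ : γ + 2 ≤ n) :
    IsCapable (PresentedGroup (relsII n n γ σ)) := by
  obtain ⟨M, _, c, y, D, hDc, hDD, hDp, hL⟩ := model_exists (2 ^ (n + σ - γ)) (2 ^ γ) (2 ^ σ)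
    (pow_dvd_pow _ (by omega))
  have hDy : D y = 0 := by rw [← hDc, hDD]
  let T : (ℤ × M) ≃+ (ℤ × M) :=
    { toFun := fun z => (z.1, z.1 • c + (z.2 + D z.2))
      invFun := fun z => (z.1, (z.2 - z.1 • c) - D (z.2 - z.1 • c))
      left_inv := fun z => by simp [hDD]
      right_inv := fun z => by simp [hDD]
      map_add' := fun z w => by
        ext
        · rfl
        · simp only [Prod.snd_add, Prod.fst_add, map_add, add_smul]; abel }
  have hT : ∀ u z, T (u, z) = (u, u • c + (z + D z)) := fun u z => rfl
  let f : FreeGroup (Fin 2) →* Equiv.Perm (ℤ × M) :=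
    FreeGroup.lift ![transl (1, 0), (T.toEquiv : Equiv.Perm (ℤ × M))⁻¹]
  have f0 : f (FreeGroup.of 0) = transl (1, 0) := by simp [f]
  have f1 : f (FreeGroup.of 1) = (T.toEquiv : Equiv.Perm (ℤ × M))⁻¹ := by simp [f]
  have fc : f (pcomm (FreeGroup.of 0) (FreeGroup.of 1)) = transl (0, c) := by
    rw [map_pcomm, f0, f1, transl_pcomm, hT]
    congr 1
    simp
  have hy : ((2:ℤ) ^ γ) • y = 0 := by rw [← hDc, hDp]
  have hnc : ((2:ℤ) ^ n) • c = 0 := by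
    have := (hL (2 ^ n) 0).2 ⟨2 ^ (γ - σ), 1, by rw [← pow_add]; congr 1; omega, by
        rw [← pow_add, show γ - σ + σ = γ by omega]; ring⟩
    rwa [zero_smul, add_zero] at this
  have hpow : ∀ j : ℤ, ∃ e : ℤ, 2 * e = j * (j - 1) ∧
      ((T.toEquiv : Equiv.Perm (ℤ × M)) ^ j) (1, 0) = (1, j • c + e • y) := by
    intro j
    induction j using Int.induction_on with
    | zero => exact ⟨0, by simp, by simp⟩
    | succ k ih =>
      obtain ⟨e, he, h⟩ := ih
      refine ⟨e + k, by linarith, ?_⟩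
      rw [zpow_add_one, (Commute.zpow_self _ _).eq, Equiv.Perm.mul_apply, h]
      show T _ = _
      rw [hT]
      ext
      · rfl
      · simp only [map_add, map_zsmul, hDc, hDy, add_smul, one_smul, smul_zero]; abel
    | pred k ih =>
      obtain ⟨e, he, h⟩ := ih
      refine ⟨e + k + 1, by linarith, ?_⟩
      rw [zpow_sub_one, ((Commute.zpow_self (T.toEquiv : Equiv.Perm (ℤ × M)) _).inv_right).eq,
        Equiv.Perm.mul_apply, h, Equiv.Perm.inv_eq_iff_eq]
      show _ = T _
      rw [hT]
      ext
      · rfl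
      · simp only [map_add, map_sub, map_neg, map_zsmul, hDc, hDy, add_smul, sub_smul, one_smul,
          smul_zero, neg_smul]
        abel
  have hbj : ∀ j : ℤ, Commute (f (FreeGroup.of 1) ^ j) (transl (1, 0)) ↔
      ((T.toEquiv : Equiv.Perm (ℤ × M)) ^ j) (1, 0) = (1, 0) := by
    intro j
    rw [f1, inv_zpow, Commute.inv_left_iff]
    have hadd : ∀ (j : ℤ) (z w : ℤ × M), ((T.toEquiv : Equiv.Perm (ℤ × M)) ^ j) (z + w) =
        ((T.toEquiv : Equiv.Perm (ℤ × M)) ^ j) z + ((T.toEquiv : Equiv.Perm (ℤ × M)) ^ j) w := by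
      intro j
      induction j using Int.induction_on with
      | zero => simp
      | succ k ih =>
        intro z w
        simp only [zpow_add_one, Equiv.Perm.mul_apply]
        rw [← ih]; congr 1; exact map_add T z w
      | pred k ih =>
        intro z w
        simp only [zpow_sub_one, Equiv.Perm.mul_apply]
        rw [← ih]; congr 1; exact map_add T.symm z w
    constructor
    · intro h
      have := congrArg (fun g : Equiv.Perm (ℤ × M) => g 0) h.eq
      simp only [Equiv.Perm.mul_apply, transl_apply] at this
      rw [hadd] at this
      have h0 := hadd j 0 0
      rw [add_zero, left_eq_add] at h0
      rw [h0, zero_add, zero_add] at this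
      exact this
    · intro h
      ext1 z
      simp only [Equiv.Perm.mul_apply, transl_apply]
      rw [hadd, h]
  have hrel : ∀ r ∈ relsII n n γ σ,
      Commute (f r) (f (FreeGroup.of 0)) ∧ Commute (f r) (f (FreeGroup.of 1)) := by
    rw [relsII_forall]
    refine ⟨⟨?_, ?_⟩, ⟨?_, ?_⟩, ⟨?_, ?_⟩, ⟨?_, ?_⟩, ⟨?_, ?_⟩⟩
    · rw [map_pow]; exact Commute.pow_self _ _
    · rw [map_pow, f0, f1, ← transl_nsmul, transl_commute_iff]
      have : (2 ^ n) • ((1:ℤ), (0:M)) = (2 ^ n, 0) := by simp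
      rw [this, hT, hnc]; simp
    · rw [map_pow, f0, ← zpow_natCast, hbj]
      obtain ⟨e, he, h⟩ := hpow ((2 ^ n : ℕ) : ℤ)
      rw [h]
      push_cast at he ⊢
      rw [hnc]
      have h2 : (2:ℤ) ^ n = 2 * (2 ^ (n - 1 - γ) * 2 ^ γ) := by
        rw [← pow_add, ← pow_succ']; congr 1; omega
      have h3 : e = (2 ^ (n - 1 - γ) * (2 ^ n - 1)) * 2 ^ γ := by
        have : 2 * e = 2 * ((2 ^ (n - 1 - γ) * (2 ^ n - 1)) * 2 ^ γ) := by
          rw [he]; nth_rewrite 1 [h2]; ring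
        linarith
      rw [h3, mul_smul, hy]; simp
    · rw [map_pow]; exact Commute.pow_self _ _
    · rw [map_pcomm, fc, f0, pcomm_eq_one.2 (transl_comm _ _)]; exact Commute.one_left _
    · rw [map_pcomm, fc, f0, pcomm_eq_one.2 (transl_comm _ _)]; exact Commute.one_left _
    · rw [map_pcomm, fc, f0, f1, transl_pcomm]; exact transl_comm _ _
    · rw [map_pcomm, fc, f1, transl_pcomm, transl_commute_iff]
      have : T (0, c) - (0, c) = (0, y) := by
        rw [hT]
        ext
        · simp
        · simp [hDc]
      rw [this, hT, hDy]; simp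
    · rw [map_mul, map_inv, map_pow, map_pow, fc, f0, ← transl_nsmul, ← transl_nsmul,
        ← transl_neg, ← transl_add]
      exact transl_comm _ _
    · rw [map_mul, map_inv, map_pow, map_pow, fc, f0, f1, ← transl_nsmul, ← transl_nsmul,
        ← transl_neg, ← transl_add, transl_commute_iff]
      have h2 : ((2 ^ (n + σ - γ) : ℕ) • ((1:ℤ), (0:M)) + -((2 ^ σ : ℕ) • ((0:ℤ), c)) : ℤ × M)
          = (2 ^ (n + σ - γ), (-2 ^ σ : ℤ) • c) := by
        ext
        · simp
        · simp only [Prod.snd_add, Prod.snd_neg, Prod.smul_snd, smul_zero, zero_add, neg_smul]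
          rw [← natCast_zsmul]; push_cast; rfl
      have h3 := (hL (2 ^ (n + σ - γ)) (-2 ^ σ)).2 ⟨1, 0, by ring, by ring⟩
      rw [h2, hT, map_zsmul, hDc]
      ext
      · rfl
      · show _ • c + (_ + _) = _
        rw [add_left_comm, h3, add_zero]
  apply capable_of f _ hrel
  intro w hw0 hw1
  have hG := (relsII_forall n n γ σ (p := fun r => PresentedGroup.mk (relsII n n γ σ) r = 1)).1
    (fun r hr => PresentedGroup.one_of_mem hr)
  set φ := PresentedGroup.mk (relsII n n γ σ) with hφ
  obtain ⟨g1, g2, g3, g4, g5⟩ := hG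
  rw [map_pow] at g1 g2
  rw [map_pcomm, pcomm_eq_one, map_pcomm] at g3 g4
  rw [map_mul, map_inv, map_pow, map_pow, mul_inv_eq_one, map_pcomm] at g5
  have hcong : ∀ w', φ w = φ w' → ∀ v, Commute (f w') (f v) := by
    intro w' h v
    have h1 : w⁻¹ * w' ∈ Subgroup.normalClosure (relsII n n γ σ) := by
      rw [← PresentedGroup.mk_eq_one_iff, ← hφ, map_mul, map_inv, h, inv_mul_cancel]
    have h2 := free_normal f _ hrel _ h1 v
    have h3 := (free_comm f _ hw0 hw1 v).mul_left h2
    rwa [← map_mul, mul_inv_cancel_left] at h3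
  obtain ⟨i, j, k, hijk⟩ := normal_form φ _ _ _ rfl rfl rfl g3 g4 w
  -- the exponent of b
  have hbj1 : φ (FreeGroup.of 1) ^ j = 1 := by
    have h1 := hcong (FreeGroup.of 0 ^ i * FreeGroup.of 1 ^ j *
      pcomm (FreeGroup.of 0) (FreeGroup.of 1) ^ k)
      (by rw [hijk]; simp only [map_mul, map_zpow, map_pcomm]) (FreeGroup.of 0)
    simp only [map_mul, map_zpow] at h1
    rw [fc, f0] at h1
    have h2 : Commute (f (FreeGroup.of 1) ^ j) (transl (1, 0)) := by
      have hA : Commute ((transl ((1:ℤ), (0:M))) ^ i)⁻¹ (transl (1, 0)) :=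
        (Commute.zpow_self _ _).inv_left
      have hC : Commute ((transl ((0:ℤ), c)) ^ k)⁻¹ (transl (1, 0)) :=
        ((transl_comm _ _).zpow_left _).inv_left
      have h3 := (hA.mul_left h1).mul_left hC
      have h4 : (transl ((1:ℤ), (0:M)) ^ i)⁻¹ *
          (transl ((1:ℤ), (0:M)) ^ i * f (FreeGroup.of 1) ^ j * transl ((0:ℤ), c) ^ k) *
          (transl ((0:ℤ), c) ^ k)⁻¹ = f (FreeGroup.of 1) ^ j := by group
      rwa [h4] at h3
    rw [hbj] at h2
    obtain ⟨e, he, h⟩ := hpow j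
    rw [h] at h2
    obtain ⟨t, r, h5, h6⟩ := (hL j e).1 (congrArg Prod.snd h2)
    obtain ⟨q, hq⟩ := suff_arith n γ σ hσγ hγ j e t r he h5 h6
    rw [hq, mul_comm, zpow_mul]
    have : (φ (FreeGroup.of 1)) ^ ((2:ℤ) ^ n) = 1 := by
      rw [← g2, ← zpow_natCast]; push_cast; rfl
    rw [this, one_zpow]
  rw [hbj1, mul_one] at hijk
  have h1 := hcong (FreeGroup.of 0 ^ i * pcomm (FreeGroup.of 0) (FreeGroup.of 1) ^ k)
      (by rw [hijk]; simp only [map_mul, map_zpow, map_pcomm]) (FreeGroup.of 1)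
  simp only [map_mul, map_zpow] at h1
  rw [fc, f0, f1, ← transl_zsmul, ← transl_zsmul, ← transl_add, transl_commute_iff] at h1
  have h2 : i • ((1:ℤ), (0:M)) + k • ((0:ℤ), c) = (i, k • c) := by
    ext
    · simp
    · simp
  rw [h2, hT, map_zsmul, hDc] at h1
  have h3 : i • c + k • y = 0 := by
    have := congrArg Prod.snd h1
    simp only at this
    rwa [add_left_comm, add_eq_left] at this
  obtain ⟨t, r, h5, h6⟩ := (hL i k).1 h3
  have cast2 : ∀ (g : PresentedGroup (relsII n n γ σ)) (k : ℕ), g ^ ((2:ℤ) ^ k) = g ^ 2 ^ k := by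
    intro g k
    rw [← zpow_natCast]; push_cast; rfl
  set a := φ (FreeGroup.of 0)
  set b := φ (FreeGroup.of 1)
  have hcγ : pcomm a b ^ 2 ^ γ = 1 := by
    have e1 : 2 ^ γ = 2 ^ σ * 2 ^ (γ - σ) := by rw [← pow_add]; congr 1; omega
    have e2 : 2 ^ (n + σ - γ) * 2 ^ (γ - σ) = 2 ^ n := by rw [← pow_add]; congr 1; omega
    rw [e1, pow_mul, ← g5, ← pow_mul, e2, g1]
  rw [hijk, h5, h6, mul_comm t, zpow_mul, cast2, g5, mul_comm r, mul_comm t, zpow_sub, zpow_mul,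
    zpow_mul, cast2, cast2, hcγ, one_zpow, one_mul, mul_inv_cancel]

lemma nec (α β γ σ : ℕ)
    (hσγ : σ < γ) (h2γ : 2 * γ ≤ α + σ) (hγltβ : γ < β)
    (h : IsCapable (PresentedGroup (relsII α β γ σ))) : α = β ∧ γ < β - 1 := by
  obtain ⟨K, _, ⟨e⟩⟩ := h
  set φ := PresentedGroup.mk (relsII α β γ σ) with hφ
  obtain ⟨A, hA⟩ := QuotientGroup.mk'_surjective (Subgroup.center K) (e.symm (φ (FreeGroup.of 0)))
  obtain ⟨B, hB⟩ := QuotientGroup.mk'_surjective (Subgroup.center K) (e.symm (φ (FreeGroup.of 1)))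
  let F : FreeGroup (Fin 2) →* K := FreeGroup.lift ![A, B]
  let π : K →* PresentedGroup (relsII α β γ σ) :=
    e.toMonoidHom.comp (QuotientGroup.mk' (Subgroup.center K))
  have F0 : F (FreeGroup.of 0) = A := by simp [F]
  have F1 : F (FreeGroup.of 1) = B := by simp [F]
  have hA' : π A = φ (FreeGroup.of 0) := by
    show e (QuotientGroup.mk' _ A) = _
    rw [hA, e.apply_symm_apply]
  have hB' : π B = φ (FreeGroup.of 1) := by
    show e (QuotientGroup.mk' _ B) = _
    rw [hB, e.apply_symm_apply]
  have hπF : ∀ w, π (F w) = φ w := by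
    intro w
    have : π.comp F = φ := by
      ext i
      fin_cases i
      · show π (F (FreeGroup.of 0)) = _
        rw [F0, hA']; rfl
      · show π (F (FreeGroup.of 1)) = _
        rw [F1, hB']; rfl
    rw [← this]; rfl
  have hπ1 : ∀ g, π g = 1 ↔ ∀ k, g * k = k * g := by
    intro g
    show e (QuotientGroup.mk' _ g) = 1 ↔ _
    rw [MulEquiv.map_eq_one_iff]
    have : (QuotientGroup.mk' (Subgroup.center K)) g = 1 ↔ g ∈ Subgroup.center K :=
      QuotientGroup.eq_one_iff _
    rw [this, Subgroup.mem_center_iff]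
    exact forall_congr' fun k => eq_comm
  have hcent : ∀ g, Commute g A → Commute g B → π g = 1 := by
    intro g h0 h1
    rw [hπ1]
    intro k
    obtain ⟨w, hw⟩ := PresentedGroup.mk_surjective (relsII α β γ σ) (π k)
    have hz : π (k * (F w)⁻¹) = 1 := by
      rw [map_mul, map_inv, hπF, ← hw, mul_inv_cancel]
    have h2 : Commute g (F w) := free_comm F g (by rwa [F0]) (by rwa [F1]) w
    have h3 : Commute g (k * (F w)⁻¹) := ((hπ1 _).1 hz g).symm
    have h4 := h3.mul_right h2
    rw [inv_mul_cancel_right] at h4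
    exact h4
  have hG := (relsII_forall α β γ σ (p := fun r => ∀ k, F r * k = k * F r)).1
    (fun r hr => (hπ1 _).1 (by rw [hπF]; exact PresentedGroup.one_of_mem hr))
  simp only [map_mul, map_inv, map_pow, map_pcomm, F0, F1] at hG
  obtain ⟨g1, g2, g3, g4, g5⟩ := hG
  refine aux_nec α β γ σ hσγ h2γ hγltβ A B _ _ _ rfl rfl rfl g3 g4 g1 g2 g5 ?_ ?_
  · intro hc
    apply a_order α β γ σ hσγ h2γ hγltβ
    rw [← hφ, ← hπF, map_pow, F0]
    exact hcent _ (Commute.pow_self _ _) hc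
  · intro hc
    apply b_order α β γ σ hγltβ
    rw [← hφ, ← hπF, map_pow, F1]
    exact hcent _ hc (Commute.pow_self _ _)

/-- A general type group with `β ≥ γ > σ ≥ 0`, `α + σ ≥ 2γ`, `α + β + σ > 3`,
and `γ < β` is capable if and only if `α = β` and `γ < β - 1`. -/
theorem general_type_small_gamma_capable_iff (α β γ σ : ℕ)
    (hσγ : σ < γ) (hγβ : γ ≤ β) (h2γ : 2 * γ ≤ α + σ)
    (hsum : 3 < α + β + σ) (hγltβ : γ < β) :
    IsCapable (PresentedGroup (relsII α β γ σ)) ↔ (α = β ∧ γ < β - 1) := by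
  constructor
  · exact nec α β γ σ hσγ h2γ hγltβ
  · rintro ⟨rfl, h⟩
    exact suff α γ σ hσγ h2γ (by omega)
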